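/- Let $P_1$ and $P_2$ be two-dimensional lattice polygons such that $P_1 \cap P_2$ is a segment $[p,q]$ of lattice length $1$ with $p, q \in \mathbb{Z}^2$, $[p,q]$ is an edge of both $P_1$ and $P_2$, and $P_3 := P_1 \cup P_2$ is convex. For $i = 1, 2$, let $h_i : A(P_i) \to \mathbb{R}$ be a height function inducing a subdivision $\Delta_i$ of $P_i$ and satisfying $h_i(p) = h_i(q) = 0$ and $h_i(x) > 0$ for all $x \in A(P_i) \setminus \{p,q\}$. Let $f : \mathbb{R}^2 \to \mathbb{R}$ be an affine map with $f(p) = f(q) = 0$ and $f > 0$ on $P_2 \setminus [p,q]$ (hence $f < 0$ on $P_1 \setminus [p,q]$). Then for all sufficiently large $c > 0$, the height function $h : A(P_3) \to \mathbb{R}$ defined by $h(x) = h_1(x)$ for $x \in A(P_1)$ and $h(x) = h_2(x) + c \cdot f(x)$ for $x \in A(P_2)$ (these agree on $A(P_1) \cap A(P_2) = \{p, q\}$, where both vanish) induces the subdivision $\Delta_1 \cup \Delta_2$ of $P_3$. -/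

import Mathlib

/-- A point of `ℝ × ℝ` is a lattice point if both coordinates are integers. -/
def IsLatticePoint (x : ℝ × ℝ) : Prop := ∃ a b : ℤ, x = ((a : ℝ), (b : ℝ))

/-- `A(P)`: the set of lattice points of `P`. -/
def latticePoints (P : Set (ℝ × ℝ)) : Set (ℝ × ℝ) := {x ∈ P | IsLatticePoint x}

/-- A lattice polygon: the convex hull of a finite set of lattice points. -/
def IsLatticePolygon (P : Set (ℝ × ℝ)) : Prop :=
  ∃ S : Finset (ℝ × ℝ), (∀ x ∈ S, IsLatticePoint x) ∧ P = convexHull ℝ (S : Set (ℝ × ℝ))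

/-- The cells of the subdivision induced by a height function `h` on the point set `A`:
the two-dimensional sets of the form `conv {x ∈ A | ℓ x = h x}` where `ℓ` is an affine
map with `ℓ ≤ h` on `A`. -/
def inducedCells (A : Set (ℝ × ℝ)) (h : ℝ × ℝ → ℝ) : Set (Set (ℝ × ℝ)) :=
  { C | (∃ ℓ : (ℝ × ℝ) →ᵃ[ℝ] ℝ, (∀ x ∈ A, ℓ x ≤ h x) ∧
      C = convexHull ℝ {x ∈ A | ℓ x = h x}) ∧ ¬ Collinear ℝ C }

/-- A subdivision of a two-dimensional lattice polygon `P`: a finite collection of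
two-dimensional lattice polygons covering `P`, any two of which meet in a common
(possibly empty) face of each. -/
def IsSubdivision (P : Set (ℝ × ℝ)) (Δ : Set (Set (ℝ × ℝ))) : Prop :=
  Δ.Finite ∧
  (∀ C ∈ Δ, IsLatticePolygon C ∧ ¬ Collinear ℝ C) ∧
  ⋃₀ Δ = P ∧
  ∀ C ∈ Δ, ∀ D ∈ Δ, IsExposed ℝ C (C ∩ D) ∧ IsExposed ℝ D (C ∩ D)

/-- A regular subdivision: one induced by some height function on the lattice points. -/
def IsRegularSubdivision (P : Set (ℝ × ℝ)) (Δ : Set (Set (ℝ × ℝ))) : Prop :=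
  IsSubdivision P Δ ∧ ∃ h : ℝ × ℝ → ℝ, Δ = inducedCells (latticePoints P) h

/-- The segment `[p,q]` is an edge of the convex polygon `P`: it is contained in `P` and
there is an affine map vanishing on `[p,q]` and strictly positive on `P \ [p,q]`. -/
def IsEdgeSeg (P : Set (ℝ × ℝ)) (p q : ℝ × ℝ) : Prop :=
  segment ℝ p q ⊆ P ∧
  ∃ f : (ℝ × ℝ) →ᵃ[ℝ] ℝ, (∀ x ∈ segment ℝ p q, f x = 0) ∧
    (∀ x ∈ P \ segment ℝ p q, 0 < f x)

/-- The segment between the lattice points `p ≠ q` has lattice length one: `p` and `q` are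
the only lattice points it contains. -/
def LatticeLengthOne (p q : ℝ × ℝ) : Prop :=
  p ≠ q ∧ IsLatticePoint p ∧ IsLatticePoint q ∧
    ∀ x ∈ segment ℝ p q, IsLatticePoint x → x = p ∨ x = q

/-!
An affine functional supporting a cell of `Δ₁` from below stays strictly below the graph of
`h₂ + c • f` at the lattice points outside `P₁` once `c` is large, because `f` is positive there, so
the cell survives in the glued subdivision. Subtracting `c • f` from the glued height function
exchanges the roles of `P₁` and `P₂`, because `f` is negative on the other side. Finally, a cell of
the glued subdivision is covered by the surviving ones, so it has a full-dimensional intersection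
with one of them; the supporting functionals of the two agree on this intersection, hence
everywhere, and the cells coincide.
-/

open Filter Module MeasureTheory Set Topology

lemma collinear_segment {k V : Type*} [Field k] [LinearOrder k] [IsStrictOrderedRing k]
    [AddCommGroup V] [Module k V] (p q : V) : Collinear k (segment k p q) := by
  rw [← convexHull_pair, Collinear, ← direction_affineSpan, affineSpan_convexHull,
    direction_affineSpan]
  exact collinear_pair k p q

lemma affineSpan_eq_top_iff_not_collinear {k V : Type*} [DivisionRing k] [AddCommGroup V]
    [Module k V] (hV : finrank k V = 2) {s : Set V} : affineSpan k s = ⊤ ↔ ¬ Collinear k s := by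
  have : FiniteDimensional k V := .of_finrank_pos (by omega)
  rcases s.eq_empty_or_nonempty with rfl | hs
  · have : Nontrivial V := nontrivial_of_finrank_pos (R := k) (by omega)
    simp [collinear_empty]
  rw [AffineSubspace.affineSpan_eq_top_iff_vectorSpan_eq_top_of_nonempty k _ _ hs,
    collinear_iff_finrank_le_one]
  refine ⟨fun htop => by rw [htop, finrank_top, hV]; decide,
    fun hrank => Submodule.eq_top_of_finrank_eq ?_⟩
  have := Submodule.finrank_le (vectorSpan k s)
  omega

lemma affineMap_le_of_mem_convexHull {k V : Type*} [Field k] [LinearOrder k]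
    [IsStrictOrderedRing k] [AddCommGroup V] [Module k V] {s : Set V} {ℓ ℓ' : V →ᵃ[k] k}
    (hle : ∀ x ∈ s, ℓ x ≤ ℓ' x) {x : V} (hx : x ∈ convexHull k s) : ℓ x ≤ ℓ' x := by
  have hconv : Convex k ((ℓ' - ℓ) ⁻¹' Ici 0) := (convex_Ici 0).affine_preimage _
  have hsub : s ⊆ (ℓ' - ℓ) ⁻¹' Ici 0 := fun y hy => by simpa using hle y hy
  simpa using convexHull_min hsub hconv hx

section RegularCells

variable {E : Type*} [AddCommGroup E] [Module ℝ E] {A B C D : Set E} {h h' : E → ℝ}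

/-- The cells of the regular subdivision induced by the heights `h` on the point configuration `A`,
in any dimension: `inducedCells` is the planar case, where full-dimensional means not collinear. -/
def regularCells (A : Set E) (h : E → ℝ) : Set (Set E) :=
  {C | ∃ ℓ : E →ᵃ[ℝ] ℝ, (∀ x ∈ A, ℓ x ≤ h x) ∧ C = convexHull ℝ {x ∈ A | ℓ x = h x} ∧
    affineSpan ℝ C = ⊤}

lemma finite_regularCells (hA : A.Finite) : (regularCells A h).Finite := by
  refine (hA.finite_subsets.image (convexHull ℝ)).subset ?_
  rintro _ ⟨ℓ, -, rfl, -⟩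
  exact ⟨_, sep_subset _ _, rfl⟩

lemma convex_of_mem_regularCells (hC : C ∈ regularCells A h) : Convex ℝ C := by
  obtain ⟨ℓ, -, rfl, -⟩ := hC
  exact convex_convexHull ℝ _

lemma affineSpan_eq_top_of_mem_regularCells (hC : C ∈ regularCells A h) : affineSpan ℝ C = ⊤ := by
  obtain ⟨ℓ, -, -, hspan⟩ := hC
  exact hspan

lemma subset_convexHull_of_mem_regularCells (hC : C ∈ regularCells A h) : C ⊆ convexHull ℝ A := by
  obtain ⟨ℓ, -, rfl, -⟩ := hC
  exact convexHull_mono (sep_subset _ _)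

lemma regularCells_subset_of_eq_add_affineMap (g : E →ᵃ[ℝ] ℝ) (hg : ∀ x ∈ A, h' x = h x + g x) :
    regularCells A h ⊆ regularCells A h' := by
  rintro C ⟨ℓ, hℓ, hC, hspan⟩
  refine ⟨ℓ + g, fun x hx => ?_, ?_, hspan⟩
  · simpa [hg x hx] using hℓ x hx
  · rw [hC, sep_ext_iff.2 fun x hx => ?_]
    simp [hg x hx]

lemma convexHull_sep_mem_regularCells_of_subset {ℓ : E →ᵃ[ℝ] ℝ} (hAB : A ⊆ B)
    (hℓ : ∀ x ∈ A, ℓ x ≤ h x) (hspan : affineSpan ℝ (convexHull ℝ {x ∈ A | ℓ x = h x}) = ⊤)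
    (heq : EqOn h' h A) (hlt : ∀ x ∈ B \ A, ℓ x < h' x) :
    convexHull ℝ {x ∈ A | ℓ x = h x} ∈ regularCells B h' := by
  have hcontact : {x ∈ A | ℓ x = h x} = {x ∈ B | ℓ x = h' x} := by
    ext x
    refine ⟨fun hx => ⟨hAB hx.1, hx.2.trans (heq hx.1).symm⟩, fun hx => ?_⟩
    have hxA : x ∈ A := by_contra fun hxA => (hlt x ⟨hx.1, hxA⟩).ne hx.2
    exact ⟨hxA, hx.2.trans (heq hxA)⟩
  refine ⟨ℓ, fun x hx => ?_, congrArg _ hcontact, hspan⟩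
  by_cases hxA : x ∈ A
  · exact (hℓ x hxA).trans_eq (heq hxA).symm
  · exact (hlt x ⟨hx, hxA⟩).le

lemma eventually_regularCells_subset_regularCells_union {h₁ h₂ f : E → ℝ} (hA : A.Finite)
    (hB : B.Finite) (hf : ∀ x ∈ B \ A, 0 < f x) :
    ∀ᶠ c : ℝ in atTop, ∀ h : E → ℝ, EqOn h h₁ A → (∀ x ∈ B, h x = h₂ x + c * f x) →
      regularCells A h₁ ⊆ regularCells (A ∪ B) h := by
  have hcell : ∀ C ∈ regularCells A h₁, ∀ᶠ c : ℝ in atTop, ∀ h : E → ℝ, EqOn h h₁ A →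
      (∀ x ∈ B, h x = h₂ x + c * f x) → C ∈ regularCells (A ∪ B) h := by
    rintro _ ⟨ℓ, hℓ, rfl, hspan⟩
    have hbelow : ∀ x ∈ B \ A, ∀ᶠ c : ℝ in atTop, ℓ x < h₂ x + c * f x := fun x hx =>
      (tendsto_atTop_add_const_left _ _
        (tendsto_id.atTop_mul_const (hf x hx))).eventually_gt_atTop _
    filter_upwards [(eventually_all_finite hB.sdiff).2 hbelow] with c hc h hhA hhB
    refine convexHull_sep_mem_regularCells_of_subset subset_union_left hℓ hspan hhA ?_
    rintro x ⟨hxA | hxB, hx⟩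
    · exact absurd hxA hx
    · exact (hc x ⟨hxB, hx⟩).trans_eq (hhB x hxB).symm
  filter_upwards [(eventually_all_finite (finite_regularCells hA)).2 hcell] with c hc h hhA hhB C hC
  exact hc C hC h hhA hhB

lemma eq_of_mem_regularCells_of_affineSpan_inter_eq_top (hC : C ∈ regularCells A h)
    (hD : D ∈ regularCells A h) (hspan : affineSpan ℝ (C ∩ D) = ⊤) : C = D := by
  obtain ⟨ℓ, hℓ, rfl, -⟩ := hC
  obtain ⟨ℓ', hℓ', rfl, -⟩ := hD
  have heq : EqOn ℓ ℓ' (convexHull ℝ {x ∈ A | ℓ x = h x} ∩ convexHull ℝ {x ∈ A | ℓ' x = h x}) :=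
    fun x hx => le_antisymm
      (affineMap_le_of_mem_convexHull (fun y hy => (hℓ y hy.1).trans_eq hy.2.symm) hx.2)
      (affineMap_le_of_mem_convexHull (fun y hy => (hℓ' y hy.1).trans_eq hy.2.symm) hx.1)
  rw [AffineMap.ext_on hspan heq]

end RegularCells

lemma isClosed_sUnion_regularCells {E : Type*} [AddCommGroup E] [Module ℝ E] [TopologicalSpace E]
    [IsTopologicalAddGroup E] [ContinuousSMul ℝ E] [T2Space E] {A : Set E} {h : E → ℝ}
    (hA : A.Finite) : IsClosed (⋃₀ regularCells A h) := by
  rw [sUnion_eq_biUnion]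
  refine (finite_regularCells hA).isClosed_biUnion ?_
  rintro _ ⟨ℓ, -, rfl, -⟩
  exact (hA.subset (sep_subset _ _)).isClosed_convexHull ℝ

section Covering

variable {E : Type*} [NormedAddCommGroup E] [NormedSpace ℝ E] [FiniteDimensional ℝ E]

lemma exists_affineSpan_inter_eq_top {D : Set E} {Δ : Set (Set E)} (hD : Convex ℝ D)
    (hspan : affineSpan ℝ D = ⊤) (hΔ : Δ.Countable) (hcov : D ⊆ ⋃₀ Δ) :
    ∃ C ∈ Δ, affineSpan ℝ (C ∩ D) = ⊤ := by
  borelize E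
  let μ : Measure E := Measure.addHaar
  by_contra! hproper
  have hnull : μ D = 0 := by
    have hcovD : D ⊆ ⋃ C ∈ Δ, C ∩ D := fun x hx => by
      obtain ⟨C, hC, hxC⟩ := hcov hx
      exact mem_biUnion hC ⟨hxC, hx⟩
    exact measure_mono_null hcovD <| (measure_biUnion_null_iff hΔ).2 fun C hC =>
      measure_mono_null (subset_affineSpan ℝ _) (Measure.addHaar_affineSubspace μ _ (hproper C hC))
  have hint : (interior D).Nonempty := hD.interior_nonempty_iff_affineSpan_eq_top.2 hspan
  exact (Measure.measure_pos_of_nonempty_interior μ hint).ne' hnull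

lemma eq_regularCells_of_subset_of_convexHull_subset_sUnion {A : Set E} {h : E → ℝ}
    {Δ : Set (Set E)} (hA : A.Finite) (hsub : Δ ⊆ regularCells A h)
    (hcov : convexHull ℝ A ⊆ ⋃₀ Δ) : Δ = regularCells A h := by
  refine hsub.antisymm fun D hD => ?_
  obtain ⟨C, hC, hCD⟩ := exists_affineSpan_inter_eq_top (convex_of_mem_regularCells hD)
    (affineSpan_eq_top_of_mem_regularCells hD) ((finite_regularCells hA).subset hsub).countable
    ((subset_convexHull_of_mem_regularCells hD).trans hcov)
  exact eq_of_mem_regularCells_of_affineSpan_inter_eq_top (hsub hC) hD hCD ▸ hC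

end Covering

/-- A segment from a point of `P₁ \ P₂` to a point of `P₂ \ P₁` stays in `P₁ ∪ P₂`, so by
connectedness it meets `P₁ ∩ P₂`, where `f` vanishes. -/
lemma affineMap_neg_of_convex_union {E : Type*} [AddCommGroup E] [Module ℝ E] [TopologicalSpace E]
    [ContinuousAdd E] [ContinuousSMul ℝ E] {P₁ P₂ : Set E} (hP₁ : IsClosed P₁) (hP₂ : IsClosed P₂)
    (hconv : Convex ℝ (P₁ ∪ P₂)) (hne : ¬ P₂ ⊆ P₁) {f : E →ᵃ[ℝ] ℝ}
    (hzero : ∀ x ∈ P₁ ∩ P₂, f x = 0) (hpos : ∀ x ∈ P₂ \ P₁, 0 < f x) {x : E} (hx : x ∈ P₁ \ P₂) :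
    f x < 0 := by
  obtain ⟨y, hy₂, hy₁⟩ := not_subset.1 hne
  have hfy : 0 < f y := hpos y ⟨hy₂, hy₁⟩
  obtain ⟨z, hz, hz₁₂⟩ := isPreconnected_closed_iff.1 (convex_segment (𝕜 := ℝ) x y).isPreconnected
    P₁ P₂ hP₁ hP₂ (hconv.segment_subset (.inl hx.1) (.inr hy₂))
    ⟨x, left_mem_segment ℝ x y, hx.1⟩ ⟨y, right_mem_segment ℝ x y, hy₂⟩
  have hzx : z ≠ x := fun h => hx.2 (h ▸ hz₁₂.2)
  rw [segment_eq_image_lineMap] at hz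
  obtain ⟨t, ⟨ht₀, ht₁⟩, rfl⟩ := hz
  have ht : 0 < t := ht₀.lt_of_ne fun h => hzx (by simp [← h])
  have hfz : (1 - t) * f x + t * f y = 0 := by
    simpa [AffineMap.apply_lineMap, AffineMap.lineMap_apply_ring] using hzero _ hz₁₂
  by_contra! hfx
  have hnonneg : 0 ≤ (1 - t) * f x := mul_nonneg (sub_nonneg.2 ht₁) hfx
  linarith [mul_pos ht hfy]

theorem glued_height_function_induces_union_general {E : Type*} [NormedAddCommGroup E]
    [NormedSpace ℝ E] [FiniteDimensional ℝ E] {Λ P₁ P₂ : Set E} {h₁ h₂ : E → ℝ} {f : E →ᵃ[ℝ] ℝ}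
    (hfin₁ : (P₁ ∩ Λ).Finite) (hfin₂ : (P₂ ∩ Λ).Finite)
    (hcov₁ : ⋃₀ regularCells (P₁ ∩ Λ) h₁ = P₁) (hcov₂ : ⋃₀ regularCells (P₂ ∩ Λ) h₂ = P₂)
    (hconv : Convex ℝ (P₁ ∪ P₂)) (hne : ¬ P₂ ⊆ P₁)
    (hzero : ∀ x ∈ P₁ ∩ P₂, f x = 0) (hpos : ∀ x ∈ P₂ \ P₁, 0 < f x) :
    ∀ᶠ c : ℝ in atTop, ∀ h : E → ℝ, EqOn h h₁ (P₁ ∩ Λ) →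
      (∀ x ∈ P₂ ∩ Λ, h x = h₂ x + c * f x) →
      regularCells (P₁ ∩ Λ) h₁ ∪ regularCells (P₂ ∩ Λ) h₂ = regularCells ((P₁ ∪ P₂) ∩ Λ) h := by
  have hneg : ∀ x ∈ P₁ \ P₂, f x < 0 := fun x hx => affineMap_neg_of_convex_union
    (hcov₁ ▸ isClosed_sUnion_regularCells hfin₁) (hcov₂ ▸ isClosed_sUnion_regularCells hfin₂)
    hconv hne hzero hpos hx
  have hpos₂ : ∀ x ∈ (P₂ ∩ Λ) \ (P₁ ∩ Λ), 0 < f x :=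
    fun x hx => hpos x ⟨hx.1.1, fun hx₁ => hx.2 ⟨hx₁, hx.1.2⟩⟩
  have hpos₁ : ∀ x ∈ (P₁ ∩ Λ) \ (P₂ ∩ Λ), 0 < -f x :=
    fun x hx => neg_pos.2 (hneg x ⟨hx.1.1, fun hx₂ => hx.2 ⟨hx₂, hx.1.2⟩⟩)
  filter_upwards [eventually_regularCells_subset_regularCells_union hfin₁ hfin₂ hpos₂,
    eventually_regularCells_subset_regularCells_union (h₁ := h₂) (h₂ := h₁) hfin₂ hfin₁ hpos₁]
    with c hc₁ hc₂ h hh₁ hh₂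
  have hsub₁ := hc₁ h hh₁ hh₂
  have hsub₂ : regularCells (P₂ ∩ Λ) h₂ ⊆ regularCells (P₁ ∩ Λ ∪ P₂ ∩ Λ) h := by
    have hcells := hc₂ (fun x => h x - c * f x) (fun x hx => by simp [hh₂ x hx])
      (fun x hx => by rw [hh₁ hx]; ring)
    rw [union_comm (P₂ ∩ Λ)] at hcells
    exact hcells.trans (regularCells_subset_of_eq_add_affineMap (c • f) fun x _ => by simp)
  rw [union_inter_distrib_right]
  refine eq_regularCells_of_subset_of_convexHull_subset_sUnion (hfin₁.union hfin₂)
    (union_subset hsub₁ hsub₂) ?_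
  rw [sUnion_union, hcov₁, hcov₂]
  exact convexHull_min (union_subset_union inter_subset_left inter_subset_left) hconv

lemma inducedCells_eq_regularCells (A : Set (ℝ × ℝ)) (h : ℝ × ℝ → ℝ) :
    inducedCells A h = regularCells A h := by
  have hrank : finrank ℝ (ℝ × ℝ) = 2 := by simp
  ext C
  simp only [inducedCells, regularCells, mem_ofPred_eq, affineSpan_eq_top_iff_not_collinear hrank,
    ← and_assoc, exists_and_right]

lemma finite_latticePoints {P : Set (ℝ × ℝ)} (hP : Bornology.IsBounded P) :
    (latticePoints P).Finite := by
  have hemb := Int.isClosedEmbedding_coe_real.prodMap Int.isClosedEmbedding_coe_real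
  refine ((hemb.isCompact_preimage hP.isCompact_closure).finite_of_discrete.image
    (Prod.map Int.cast Int.cast)).subset ?_
  rintro _ ⟨hx, a, b, rfl⟩
  exact ⟨(a, b), subset_closure hx, rfl⟩

lemma IsLatticePolygon.isBounded {P : Set (ℝ × ℝ)} (hP : IsLatticePolygon P) :
    Bornology.IsBounded P := by
  obtain ⟨S, -, rfl⟩ := hP
  exact isBounded_convexHull.2 S.finite_toSet.isBounded

/-- Given normalized height functions `h₁, h₂` inducing subdivisions
`Δ₁, Δ₂` of the two polygons `P₁, P₂` glued along an edge `[p,q]` of lattice length one,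
and an affine map `f` vanishing on the gluing line and positive on `P₂ \ [p,q]`, for all
sufficiently large `c > 0` the combined height function `h₁` on `A(P₁)` and `h₂ + c·f` on
`A(P₂)` induces the subdivision `Δ₁ ∪ Δ₂` of `P₃ = P₁ ∪ P₂`. -/
theorem glued_height_function_induces_union
    (P₁ P₂ : Set (ℝ × ℝ)) (Δ₁ Δ₂ : Set (Set (ℝ × ℝ))) (p q : ℝ × ℝ)
    (hP₁ : IsLatticePolygon P₁) (hP₂ : IsLatticePolygon P₂)
    (hdim₁ : ¬ Collinear ℝ P₁) (hdim₂ : ¬ Collinear ℝ P₂)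
    (hcap : P₁ ∩ P₂ = segment ℝ p q) (hlen : LatticeLengthOne p q)
    (hedge₁ : IsEdgeSeg P₁ p q) (hedge₂ : IsEdgeSeg P₂ p q)
    (hconv : Convex ℝ (P₁ ∪ P₂))
    (h₁ h₂ : ℝ × ℝ → ℝ)
    (hsub₁ : IsSubdivision P₁ Δ₁) (hsub₂ : IsSubdivision P₂ Δ₂)
    (hind₁ : Δ₁ = inducedCells (latticePoints P₁) h₁)
    (hind₂ : Δ₂ = inducedCells (latticePoints P₂) h₂)
    (h₁p : h₁ p = 0) (h₁q : h₁ q = 0) (h₂p : h₂ p = 0) (h₂q : h₂ q = 0)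
    (h₁pos : ∀ x ∈ latticePoints P₁ \ {p, q}, 0 < h₁ x)
    (h₂pos : ∀ x ∈ latticePoints P₂ \ {p, q}, 0 < h₂ x)
    (f : (ℝ × ℝ) →ᵃ[ℝ] ℝ) (hfp : f p = 0) (hfq : f q = 0)
    (hfpos : ∀ x ∈ P₂ \ segment ℝ p q, 0 < f x) :
    ∃ c₀ : ℝ, 0 < c₀ ∧ ∀ c : ℝ, c₀ ≤ c → ∀ h : ℝ × ℝ → ℝ,
      (∀ x ∈ latticePoints P₁, h x = h₁ x) →
      (∀ x ∈ latticePoints P₂, h x = h₂ x + c * f x) →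
      Δ₁ ∪ Δ₂ = inducedCells (latticePoints (P₁ ∪ P₂)) h := by
  have hne : ¬ P₂ ⊆ P₁ := fun hsub =>
    hdim₂ ((collinear_segment p q).subset (hcap ▸ subset_inter hsub subset_rfl))
  have hzero : ∀ x ∈ P₁ ∩ P₂, f x = 0 := hcap ▸
    ((convex_singleton (𝕜 := ℝ) (0 : ℝ)).affine_preimage f).segment_subset hfp hfq
  have hpos : ∀ x ∈ P₂ \ P₁, 0 < f x := fun x hx => hfpos x ⟨hx.1, fun hs => hx.2 (hedge₁.1 hs)⟩
  have hcov₁ := hsub₁.2.2.1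
  have hcov₂ := hsub₂.2.2.1
  simp only [hind₁, hind₂, inducedCells_eq_regularCells] at hcov₁ hcov₂ ⊢
  have hglue := glued_height_function_induces_union_general (finite_latticePoints hP₁.isBounded)
    (finite_latticePoints hP₂.isBounded) hcov₁ hcov₂ hconv hne hzero hpos
  obtain ⟨c₀, hc₀⟩ := ((eventually_gt_atTop 0).and hglue).exists_forall_of_atTop
  exact ⟨c₀, (hc₀ c₀ le_rfl).1, fun c hc => (hc₀ c hc).2⟩
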